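/- arXiv:1112.0906 — 2 statements merged into one kernel-verified Lean document; each statement's English description precedes it below -/
import Mathlib

section
/- Let μ be a regular conditional distribution of X given Y, let A be a subset of the topological support of μ_Y with either A ⊆ closure(interior(A)) or μ_Y(A) = 1, and suppose y ↦ μ(U,y) is continuous on A for every Borel U ⊆ F. Then for every y ∈ A, the posterior distribution μ(·,y) is absolutely continuous with respect to the prior distribution μ_X. -/
open MeasureTheory ProbabilityTheory

/-!
If `U` is null for the prior, then `E[1_U(X) | σ(Y)] = 0` almost surely, so `y ↦ μ(U, y)` vanishes
`μ_Y`-almost everywhere. Either hypothesis on `A` forces every point of `A` into the support of the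
restriction of `μ_Y` to `A`, and a function that is continuous on `A` and vanishes almost everywhere
on `A` vanishes at all such points.
-/

open Filter Topology

section Support

variable {G : Type*} [MeasurableSpace G] {ν : Measure G} {A : Set G}

-- `A` need not be measurable, so full outer measure does not make `Aᶜ` null.
theorem restrict_eq_self_of_measure_eq_univ [IsFiniteMeasure ν] (hA : ν A = ν Set.univ) :
    ν.restrict A = ν := by
  ext s hs
  rw [Measure.restrict_apply hs, Set.inter_comm,
    Measure.measure_inter_eq_of_measure_eq hs hA A.subset_univ (measure_ne_top ν A), Set.univ_inter]

variable [TopologicalSpace G] [OpensMeasurableSpace G]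

theorem subset_support_restrict_of_subset_closure_interior (hsupp : A ⊆ ν.support)
    (hA : A ⊆ closure (interior A)) : A ⊆ (ν.restrict A).support := by
  have hint : interior A ⊆ (ν.restrict A).support := fun y hy =>
    Measure.interior_inter_support ⟨hy, hsupp (interior_subset hy)⟩
  exact hA.trans (closure_minimal hint Measure.isClosed_support)

theorem eqOn_of_ae_eq_of_subset_support_restrict {E : Type*} [TopologicalSpace E]
    [T2Space E] {f g : G → E} (hfg : f =ᵐ[ν.restrict A] g) (hf : ContinuousOn f A)
    (hg : ContinuousOn g A) (hA : A ⊆ (ν.restrict A).support) : Set.EqOn f g A := by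
  intro y hy
  by_contra hne
  have hne_nhds : ∀ᶠ z in 𝓝[A] y, f z ≠ g z :=
    ((hf y hy).prodMk (hg y hy)).eventually (isClosed_diagonal.isOpen_compl.mem_nhds hne)
  have hnull : ν ({z | f z ≠ g z} ∩ A) = 0 :=
    le_antisymm ((Measure.le_restrict_apply A _).trans_eq (ae_iff.1 hfg)) zero_le
  obtain ⟨u, hu_pos, hu⟩ := ((Measure.mem_support_restrict.1 (hA hy)).and_eventually
    (eventually_smallSets_subset.2 (inter_mem hne_nhds self_mem_nhdsWithin))).exists
  exact hu_pos.ne' (measure_mono_null hu hnull)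

end Support

section ConditionalExpectation

variable {Ω F G : Type*} [MeasurableSpace Ω] [MeasurableSpace F] [MeasurableSpace G]
  {P : Measure Ω}

theorem ae_map_iff₀ {Y : Ω → G} (hY : AEMeasurable Y P) {p : G → Prop}
    (hp : NullMeasurableSet {y | p y} (P.map Y)) :
    (∀ᵐ y ∂P.map Y, p y) ↔ ∀ᵐ ω ∂P, p (Y ω) := by
  rw [ae_iff, ae_iff]
  exact Eq.congr_left (Measure.map_apply₀ hY hp.compl)

theorem condExp_indicator_comp_ae_eq_zero {X : Ω → F} (hX : AEMeasurable X P) {U : Set F}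
    (hU : P.map X U = 0) (m : MeasurableSpace Ω) :
    P[fun ω => U.indicator (fun _ => (1 : ℝ)) (X ω)|m] =ᵐ[P] 0 := by
  have hind : (fun ω => U.indicator (fun _ => (1 : ℝ)) (X ω)) =ᵐ[P] 0 :=
    ae_eq_comp hX (indicator_meas_zero hU)
  exact (condExp_congr_ae hind).trans (by rw [condExp_zero])

end ConditionalExpectation

theorem stmt8_general {Ω F G : Type*} [MeasurableSpace Ω] [MeasurableSpace F]
    [TopologicalSpace G] [MeasurableSpace G] [OpensMeasurableSpace G]
    {P : Measure Ω} [IsProbabilityMeasure P]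
    {X : Ω → F} {Y : Ω → G} (hX : AEMeasurable X P) (hY : Measurable Y)
    {μ : G → Measure F} [∀ y, IsFiniteMeasure (μ y)]
    (hmeas : ∀ U : Set F, MeasurableSet U → AEMeasurable (fun y => (μ y).real U) (P.map Y))
    (hcond : ∀ U : Set F, MeasurableSet U →
      (fun ω => (μ (Y ω)).real U) =ᵐ[P]
        P[fun ω => U.indicator (fun _ => (1 : ℝ)) (X ω)|MeasurableSpace.comap Y inferInstance])
    {A : Set G} (hsupp : A ⊆ (P.map Y).support)
    (hA : A ⊆ closure (interior A) ∨ P.map Y A = 1)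
    (hcont : ∀ U : Set F, MeasurableSet U → ContinuousOn (fun y => (μ y).real U) A) :
    ∀ y ∈ A, μ y ≪ P.map X := by
  intro y hy
  refine Measure.AbsolutelyContinuous.mk fun U hU hU_null => ?_
  have hPY : IsProbabilityMeasure (P.map Y) := Measure.isProbabilityMeasure_map hY.aemeasurable
  have hae : (fun z => (μ z).real U) =ᵐ[P.map Y] 0 :=
    (ae_map_iff₀ hY.aemeasurable ((hmeas U hU).nullMeasurable (measurableSet_singleton 0))).2
      ((hcond U hU).trans (condExp_indicator_comp_ae_eq_zero hX hU_null _))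
  have hA_supp : A ⊆ ((P.map Y).restrict A).support := by
    rcases hA with hA_interior | hA_one
    · exact subset_support_restrict_of_subset_closure_interior hsupp hA_interior
    · rwa [restrict_eq_self_of_measure_eq_univ (hA_one.trans measure_univ.symm)]
  have hzero : Set.EqOn (fun z => (μ z).real U) 0 A :=
    eqOn_of_ae_eq_of_subset_support_restrict (ae_restrict_of_ae hae) (hcont U hU)
      continuousOn_const hA_supp
  exact (measureReal_eq_zero_iff).1 (hzero hy)

/-- If `μ` is a regular conditional distribution of `X` given `Y` whose posterior probabilities
of all Borel sets are continuous on a subset `A` of the topological support of `μ_Y` with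
`A ⊆ closure (interior A)` or `μ_Y A = 1`, then for every `y ∈ A` the posterior distribution
`μ(·, y)` is absolutely continuous with respect to the prior distribution `μ_X`. -/
theorem stmt8 {Ω F G : Type*} [mΩ : MeasurableSpace Ω]
    [TopologicalSpace F] [MeasurableSpace F] [BorelSpace F] [PolishSpace F]
    [TopologicalSpace G] [MeasurableSpace G] [BorelSpace G] [PolishSpace G]
    (P : Measure Ω) [IsProbabilityMeasure P] (hP : P.IsComplete)
    (X : Ω → F) (Y : Ω → G) (hX : Measurable X) (hY : Measurable Y)
    (μ : G → Measure F)
    (hprob : ∀ y, IsProbabilityMeasure (μ y))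
    (hmeas : ∀ U : Set F, MeasurableSet U →
      AEMeasurable (fun y => (μ y U).toReal) (P.map Y))
    (hcond : ∀ U : Set F, MeasurableSet U →
      (fun ω => (μ (Y ω) U).toReal) =ᵐ[P]
        P[fun ω => Set.indicator U (fun _ => (1 : ℝ)) (X ω)|
          MeasurableSpace.comap Y inferInstance])
    (A : Set G)
    (hsupp : ∀ y ∈ A, ∀ V : Set G, IsOpen V → y ∈ V → 0 < P.map Y V)
    (hA : A ⊆ closure (interior A) ∨ P.map Y A = 1)
    (hcont : ∀ U : Set F, MeasurableSet U → ContinuousOn (fun y => (μ y U).toReal) A) :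
    ∀ y ∈ A, μ y ≪ P.map X :=
  stmt8_general hX.aemeasurable hY hmeas hcond
    (fun y hy => Measure.support_eq_forall_isOpen.ge fun V hyV hV => hsupp y hy V hV hyV) hA hcont
end

section
/- Let F and G be complete separable metric spaces, X an F-valued and Y a G-valued random variable, and μ a regular conditional distribution of X given Y. If the family of posterior distributions {μ(·,y) : y ∈ G} is dominated by a Borel measure ν on F, then for every ε > 0 there exists a compact set K ⊆ G with μ_Y(G ∖ K) < ε such that y ↦ μ(·,y) restricted to K is continuous with respect to the weak topology of measures (and hence continuous on K for each Borel set U whose boundary satisfies μ(∂U, y) = 0 for all y ∈ K). -/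
open MeasureTheory ProbabilityTheory

/-! Weak convergence of probability measures on a second-countable space can be tested on a
countable π-system of open sets, so weak continuity of `y ↦ μ y` on a set follows from continuity
there of the countably many functions `y ↦ μ y s`. Lusin's theorem, applied to the single map
`y ↦ (μ y s)ₛ` into a countable product, makes all of them continuous on one compact set.

For Lusin's theorem, enlarge the preimages `A i` of a countable base to open sets `U i` whose
excesses `U i \ A i` have small total measure: on a compact set that avoids all these excesses,
`A i` and `U i` coincide. -/

section Lusin

open scoped ENNReal

theorem exists_isOpen_superset_measure_iUnion_sdiff_lt {G ι : Type*} [TopologicalSpace G]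
    [MeasurableSpace G] {m : Measure G} [IsFiniteMeasure m] [m.OuterRegular] [Countable ι]
    {A : ι → Set G} (hA : ∀ i, NullMeasurableSet (A i) m) {ε : ℝ≥0∞} (hε : ε ≠ 0) :
    ∃ U : ι → Set G, (∀ i, A i ⊆ U i) ∧ (∀ i, IsOpen (U i)) ∧ m (⋃ i, U i \ A i) < ε := by
  obtain ⟨δ, hδ_pos, hδ_sum⟩ := ENNReal.exists_pos_sum_of_countable' hε ι
  choose U hAU hU_open hU using fun i =>
    (A i).exists_isOpen_lt_add (measure_ne_top m _) (hδ_pos i).ne'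
  refine ⟨U, hAU, hU_open, ?_⟩
  calc m (⋃ i, U i \ A i) ≤ ∑' i, m (U i \ A i) := measure_iUnion_le _
    _ ≤ ∑' i, δ i := by
      gcongr with i
      exact (measure_sdiff_lt_of_lt_add (hA i) (hAU i) (measure_ne_top m _) (hU i)).le
    _ < ε := hδ_sum

variable {G : Type*} [TopologicalSpace G] [R1Space G] [MeasurableSpace G] [BorelSpace G]
  {m : Measure G} [IsFiniteMeasure m] [m.InnerRegularCompactLTTop]

theorem exists_isCompact_disjoint_measure_compl_lt {D : Set G} {ε : ℝ≥0∞} (hD : m D < ε) :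
    ∃ K : Set G, IsCompact K ∧ Disjoint K D ∧ m Kᶜ < ε := by
  set D' := toMeasurable m D
  obtain ⟨K, hKD', hK_compact, -, hK⟩ :=
    (measurableSet_toMeasurable m D).compl.exists_isCompact_isClosed_sdiff_lt
      (measure_ne_top m _) (tsub_pos_of_lt hD).ne'
  refine ⟨K, hK_compact,
    (Set.subset_compl_iff_disjoint_right.1 hKD').mono_right (subset_toMeasurable m D), ?_⟩
  calc m Kᶜ ≤ m (D' ∪ (D'ᶜ \ K)) := by
        gcongr
        grind
    _ ≤ m D' + m (D'ᶜ \ K) := measure_union_le _ _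
    _ = m D + m (D'ᶜ \ K) := by rw [measure_toMeasurable]
    _ < m D + (ε - m D) := ENNReal.add_lt_add_left (measure_ne_top m D) hK
    _ = ε := add_tsub_cancel_of_le hD.le

theorem exists_isCompact_measure_compl_lt_forall_isOpen_preimage_val {ι : Type*} [Countable ι]
    {A : ι → Set G} (hA : ∀ i, NullMeasurableSet (A i) m) {ε : ℝ≥0∞} (hε : ε ≠ 0) :
    ∃ K : Set G, IsCompact K ∧ m Kᶜ < ε ∧ ∀ i, IsOpen ((↑) ⁻¹' A i : Set K) := by
  obtain ⟨U, hAU, hU_open, hU⟩ := exists_isOpen_superset_measure_iUnion_sdiff_lt hA hε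
  obtain ⟨K, hK_compact, hK_disj, hK⟩ := exists_isCompact_disjoint_measure_compl_lt hU
  refine ⟨K, hK_compact, hK, fun i => ?_⟩
  have hA_eq : ((↑) ⁻¹' A i : Set K) = (↑) ⁻¹' U i := by
    ext ⟨y, hy⟩
    refine ⟨fun h => hAU i h, fun h => ?_⟩
    by_contra hyA
    exact hK_disj.notMem_of_mem_left hy (Set.mem_iUnion_of_mem i ⟨h, hyA⟩)
  exact hA_eq ▸ (hU_open i).preimage continuous_subtype_val

theorem exists_isCompact_measure_compl_lt_continuousOn {β : Type*} [TopologicalSpace β]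
    [SecondCountableTopology β] [MeasurableSpace β] [OpensMeasurableSpace β] {f : G → β}
    (hf : NullMeasurable f m) {ε : ℝ≥0∞} (hε : ε ≠ 0) :
    ∃ K : Set G, IsCompact K ∧ m Kᶜ < ε ∧ ContinuousOn f K := by
  obtain ⟨B, hB_count, -, hB⟩ := TopologicalSpace.exists_countable_basis β
  have : Countable B := hB_count.to_subtype
  obtain ⟨K, hK_compact, hK, hK_open⟩ :=
    exists_isCompact_measure_compl_lt_forall_isOpen_preimage_val
      (fun V : B => hf (hB.isOpen V.2).measurableSet) hε
  exact ⟨K, hK_compact, hK, continuousOn_iff_continuous_domRestrict.2 <|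
    hB.continuous_iff.2 fun V hV => hK_open ⟨V, hV⟩⟩

end Lusin

section WeakContinuity

open scoped ENNReal

theorem exists_countable_isPiSystem_isTopologicalBasis (F : Type*) [TopologicalSpace F]
    [SecondCountableTopology F] :
    ∃ S : Set (Set F), S.Countable ∧ IsPiSystem S ∧ TopologicalSpace.IsTopologicalBasis S := by
  obtain ⟨B, hB_count, -, hB⟩ := TopologicalSpace.exists_countable_basis F
  refine ⟨_, (Set.countable_ofPred_finite_subset hB_count).image _, ?_,
    TopologicalSpace.isTopologicalBasis_of_subbasis hB.eq_generateFrom⟩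
  rintro _ ⟨t, ⟨ht_fin, htB⟩, rfl⟩ _ ⟨u, ⟨hu_fin, huB⟩, rfl⟩ -
  exact ⟨t ∪ u, ⟨ht_fin.union hu_fin, Set.union_subset htB huB⟩, Set.sInter_union t u⟩

variable {F G : Type*} [TopologicalSpace F] [MeasurableSpace F] [OpensMeasurableSpace F]
  [TopologicalSpace G] {p : G → ProbabilityMeasure F} {K : Set G}

theorem continuousOn_probabilityMeasure_of_isPiSystem [SecondCountableTopology F]
    [FirstCountableTopology G] {S : Set (Set F)} (hS : IsPiSystem S)
    (hS_basis : TopologicalSpace.IsTopologicalBasis S)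
    (hp : ∀ s ∈ S, ContinuousOn (fun y => p y s) K) : ContinuousOn p K := fun y hy =>
  hS.tendsto_probabilityMeasure_of_tendsto_of_mem
    (fun _ hs => (hS_basis.isOpen hs).measurableSet)
    (fun _ hu _ hx =>
      let ⟨s, hsS, hxs, hsu⟩ := hS_basis.exists_subset_of_mem_open hx hu
      ⟨s, hsS, (hS_basis.isOpen hsS).mem_nhds hxs, hsu⟩)
    fun s hs => hp s hs y hy

theorem continuousOn_measure_toReal_of_null_frontier [HasOuterApproxClosed F]
    (hp : ContinuousOn p K) {U : Set F} (hU : ∀ y ∈ K, (p y : Measure F) (frontier U) = 0) :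
    ContinuousOn (fun y => ((p y : Measure F) U).toReal) K := fun y hy =>
  (ENNReal.tendsto_toReal (measure_ne_top _ U)).comp <|
    ProbabilityMeasure.tendsto_measure_of_null_frontier_of_tendsto' (hp y hy) (hU y hy)

theorem exists_isCompact_continuousOn_probabilityMeasure [SecondCountableTopology F]
    [FirstCountableTopology G] [R1Space G] [MeasurableSpace G] [BorelSpace G]
    {m : Measure G} [IsFiniteMeasure m] [m.InnerRegularCompactLTTop]
    (hp : ∀ U, IsOpen U → AEMeasurable (fun y => p y U) m) {ε : ℝ≥0∞} (hε : ε ≠ 0) :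
    ∃ K : Set G, IsCompact K ∧ m Kᶜ < ε ∧ ContinuousOn p K := by
  obtain ⟨S, hS_count, hS_pi, hS_basis⟩ := exists_countable_isPiSystem_isTopologicalBasis F
  have : Countable S := hS_count.to_subtype
  have h_eval : AEMeasurable (fun y (s : S) => p y s) m :=
    aemeasurable_pi_lambda _ fun s => hp s (hS_basis.isOpen s.2)
  obtain ⟨K, hK_compact, hK, hK_cont⟩ :=
    exists_isCompact_measure_compl_lt_continuousOn h_eval.nullMeasurable hε
  exact ⟨K, hK_compact, hK, continuousOn_probabilityMeasure_of_isPiSystem hS_pi hS_basis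
    fun s hs => continuousOn_pi.1 hK_cont ⟨s, hs⟩⟩

theorem stmt9_general [SecondCountableTopology F] [HasOuterApproxClosed F]
    [FirstCountableTopology G] [R1Space G] [MeasurableSpace G] [BorelSpace G]
    (m : Measure G) [IsFiniteMeasure m] [m.InnerRegularCompactLTTop]
    (μ : G → Measure F) (hprob : ∀ y, IsProbabilityMeasure (μ y))
    (hmeas : ∀ U, IsOpen U → AEMeasurable (fun y => (μ y U).toReal) m)
    {ε : ℝ≥0∞} (hε : ε ≠ 0) :
    ∃ K : Set G, IsCompact K ∧ m Kᶜ < ε ∧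
      (∀ f : BoundedContinuousFunction F ℝ, ContinuousOn (fun y => ∫ x, f x ∂(μ y)) K) ∧
      ∀ U : Set F, (∀ y ∈ K, μ y (frontier U) = 0) →
        ContinuousOn (fun y => (μ y U).toReal) K := by
  let p : G → ProbabilityMeasure F := fun y => ⟨μ y, hprob y⟩
  have hp : ∀ U, IsOpen U → AEMeasurable (fun y => p y U) m := fun U hU =>
    aemeasurable_coe_nnreal_real_iff.1 (hmeas U hU)
  obtain ⟨K, hK_compact, hK, hpK⟩ := exists_isCompact_continuousOn_probabilityMeasure hp hε
  exact ⟨K, hK_compact, hK,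
    fun f => (ProbabilityMeasure.continuous_integral_boundedContinuousFunction f).comp_continuousOn
      hpK,
    fun _ hU => continuousOn_measure_toReal_of_null_frontier hpK hU⟩

end WeakContinuity

/-- Lusin-type continuity of dominated posteriors: on Polish spaces, if the family of posterior
distributions `{μ(·,y)}` of `X` given `Y` is dominated by a Borel measure `ν` on `F`, then for
every `ε > 0` there is a compact `K ⊆ G` with `μ_Y (G \ K) < ε` on which `y ↦ μ(·,y)` is
continuous in the weak topology of measures; hence `y ↦ μ(U,y)` is continuous on `K` for every
Borel `U` whose boundary satisfies `μ(∂U, y) = 0` for all `y ∈ K`. -/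
theorem stmt9 {Ω F G : Type*} [mΩ : MeasurableSpace Ω]
    [TopologicalSpace F] [MeasurableSpace F] [BorelSpace F] [PolishSpace F]
    [TopologicalSpace G] [MeasurableSpace G] [BorelSpace G] [PolishSpace G]
    (P : Measure Ω) [IsProbabilityMeasure P] (hP : P.IsComplete)
    (X : Ω → F) (Y : Ω → G) (hX : Measurable X) (hY : Measurable Y)
    (μ : G → Measure F)
    (hprob : ∀ y, IsProbabilityMeasure (μ y))
    (hmeas : ∀ U : Set F, MeasurableSet U →
      AEMeasurable (fun y => (μ y U).toReal) (P.map Y))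
    (hcond : ∀ U : Set F, MeasurableSet U →
      (fun ω => (μ (Y ω) U).toReal) =ᵐ[P]
        P[fun ω => Set.indicator U (fun _ => (1 : ℝ)) (X ω)|
          MeasurableSpace.comap Y inferInstance])
    (ν : Measure F) (hdom : ∀ y, μ y ≪ ν) :
    ∀ ε : ℝ, 0 < ε → ∃ K : Set G, IsCompact K ∧ P.map Y Kᶜ < ENNReal.ofReal ε ∧
      (∀ f : BoundedContinuousFunction F ℝ,
        ContinuousOn (fun y => ∫ x, f x ∂(μ y)) K) ∧
      ∀ U : Set F, MeasurableSet U → (∀ y ∈ K, μ y (frontier U) = 0) →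
        ContinuousOn (fun y => (μ y U).toReal) K := by
  intro ε hε
  have := Measure.isProbabilityMeasure_map (μ := P) hY.aemeasurable
  obtain ⟨K, hK_compact, hK, hK_int, hK_frontier⟩ := stmt9_general (P.map Y) μ hprob
    (fun U hU => hmeas U hU.measurableSet) (ENNReal.ofReal_pos.2 hε).ne'
  exact ⟨K, hK_compact, hK, hK_int, fun U _ => hK_frontier U⟩
end
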